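/- Let φ, φ' > 0 be constants and m : S¹_ℓ → ℝ smooth with max_θ m²(θ) > φ'/φ². Then the quantity (φ/2)∫(m'h − mh')² dθ − (φ'/(2φ))∫((m')² + (h')²) dθ is unbounded above as h ranges over smooth functions on S¹_ℓ with φ∫h² dθ = 1; i.e., for every M there exists such an h with the quantity exceeding M. -/

import Mathlib

open intervalIntegral in
/-- Scaling: a periodic `h` with large Rayleigh quotient can be normalized. -/
lemma stmt13_scale (l φ a B M : ℝ) (hl : 0 < l) (hφ : 0 < φ)
    (m : ℝ → ℝ) (h : ℝ → ℝ) (hh : ContDiff ℝ (⊤ : ℕ∞) h) (hp : Function.Periodic h l)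
    (hQ : M * (φ * ∫ θ in (0:ℝ)..l, (h θ) ^ 2) <
      B * (∫ θ in (0:ℝ)..l, (deriv m θ * h θ - m θ * deriv h θ) ^ 2)
        - a * (∫ θ in (0:ℝ)..l, (deriv h θ) ^ 2)) :
    ∃ h : ℝ → ℝ, ContDiff ℝ (⊤ : ℕ∞) h ∧ Function.Periodic h l ∧
      (φ * ∫ θ in (0:ℝ)..l, (h θ) ^ 2 = 1) ∧
      M < B * (∫ θ in (0:ℝ)..l, (deriv m θ * h θ - m θ * deriv h θ) ^ 2)
        - a * (∫ θ in (0:ℝ)..l, (deriv h θ) ^ 2) := by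
  have hpos : 0 < ∫ θ in (0:ℝ)..l, (h θ) ^ 2 := by
    by_cases hz : ∃ x ∈ Set.Icc (0:ℝ) l, h x ≠ 0
    · obtain ⟨x, hx, hne⟩ := hz
      exact integral_pos hl (hh.continuous.pow 2).continuousOn
        (fun _ _ => sq_nonneg _) ⟨x, hx, by positivity⟩
    · push Not at hz
      have h0 : h = fun _ => 0 := by
        funext x
        obtain ⟨y, hy, hxy⟩ := hp.exists_mem_Ico₀ hl x
        rw [hxy]
        exact hz y ⟨hy.1, hy.2.le⟩
      subst h0
      simp at hQ
  set I := ∫ θ in (0:ℝ)..l, (h θ) ^ 2 with hI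
  have hN : 0 < φ * I := by positivity
  set A := (Real.sqrt (φ * I))⁻¹ with hA
  have hA2 : A ^ 2 = (φ * I)⁻¹ := by
    rw [hA, inv_pow, Real.sq_sqrt hN.le]
  have hd : ∀ θ, deriv (fun x => A * h x) θ = A * deriv h θ := by
    intro θ
    simp
  refine ⟨fun x => A * h x, contDiff_const.mul hh, fun x => by simp [hp x], ?_, ?_⟩
  · simp only [mul_pow, integral_const_mul]
    rw [hA2, ← hI]
    field_simp
  · simp only [hd]
    have e1 : ∀ θ, (deriv m θ * (A * h θ) - m θ * (A * deriv h θ)) ^ 2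
        = A ^ 2 * (deriv m θ * h θ - m θ * deriv h θ) ^ 2 := fun θ => by ring
    simp only [e1, mul_pow, integral_const_mul]
    rw [hA2]
    have := (lt_div_iff₀ hN).2 hQ
    refine this.trans_eq ?_
    field_simp

/-- 'Only if' direction: if max m² > φ'/φ², the curvature expression is unbounded
above over normalized h. -/
theorem stmt13 (l φ φ' : ℝ) (hl : 0 < l) (hφ : 0 < φ) (hφ' : 0 < φ')
    (m : ℝ → ℝ) (hm : ContDiff ℝ (⊤ : ℕ∞) m) (hmp : Function.Periodic m l)
    (hbig : ∃ θ ∈ Set.Icc (0:ℝ) l, φ' / φ ^ 2 < (m θ) ^ 2) :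
    ∀ M : ℝ, ∃ h : ℝ → ℝ, ContDiff ℝ (⊤ : ℕ∞) h ∧ Function.Periodic h l ∧
      (φ * ∫ θ in (0:ℝ)..l, (h θ) ^ 2 = 1) ∧
      M < φ / 2 * (∫ θ in (0:ℝ)..l, (deriv m θ * h θ - m θ * deriv h θ) ^ 2)
            - φ' / (2 * φ) *
              (∫ θ in (0:ℝ)..l, (deriv m θ) ^ 2 + (deriv h θ) ^ 2) := by
  intro M
  have hm' : Continuous (deriv m) := hm.continuous_deriv (by simp)
  obtain ⟨θ₀, hθ₀, hlt⟩ := hbig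
  set J := ∫ θ in (0:ℝ)..l, (deriv m θ) ^ 2 with hJ
  set M' := max 0 (M + φ' / (2 * φ) * J) with hM'
  set g : ℝ → ℝ := fun θ => expNegInvGlue (m θ ^ 2 - φ' / φ ^ 2) with hg
  have hgs : ContDiff ℝ (⊤ : ℕ∞) g :=
    expNegInvGlue.contDiff.comp ((hm.pow 2).sub contDiff_const)
  have hgp : Function.Periodic g l := fun x => by simp [hg, hmp x]
  have hgc : Continuous g := hgs.continuous
  have hg' : Continuous (deriv g) := hgs.continuous_deriv (by simp)
  have hmc : Continuous m := hm.continuous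
  have hw : ∀ x, φ / 2 * m x ^ 2 - φ' / (2 * φ) = φ / 2 * (m x ^ 2 - φ' / φ ^ 2) := by
    intro x
    field_simp
  set C := ∫ θ in (0:ℝ)..l, (φ / 2 * m θ ^ 2 - φ' / (2 * φ)) * g θ ^ 2 with hC
  have hCpos : 0 < C := by
    refine intervalIntegral.integral_pos hl (by fun_prop) ?_ ⟨θ₀, hθ₀, ?_⟩
    · intro x _
      rw [hw]
      by_cases hx : m x ^ 2 - φ' / φ ^ 2 ≤ 0
      · simp [hg, expNegInvGlue.zero_of_nonpos hx]
      · push Not at hx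
        positivity
    · rw [hw]
      have h1 : 0 < m θ₀ ^ 2 - φ' / φ ^ 2 := by linarith
      have h2 : 0 < g θ₀ := expNegInvGlue.pos_of_pos h1
      positivity
  set G := ∫ θ in (0:ℝ)..l, g θ ^ 2 with hG
  set K := ∫ θ in (0:ℝ)..l, (φ / 2 * (deriv m θ * g θ - m θ * deriv g θ) ^ 2
    - φ' / (2 * φ) * deriv g θ ^ 2) with hK
  obtain ⟨n, hn⟩ := exists_nat_gt (max 1 ((M' * (φ * G) - K) / (C * (2 * Real.pi / l) ^ 2)))
  have hn1 : (1:ℝ) < n := (le_max_left _ _).trans_lt hn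
  have hn2 := (le_max_right _ _).trans_lt hn
  have hD : 0 < C * (2 * Real.pi / l) ^ 2 := by
    have := Real.pi_pos
    positivity
  rw [div_lt_iff₀ hD] at hn2
  set N : ℝ := n * (2 * Real.pi / l) with hN
  have hNl : N * l = n * (2 * Real.pi) := by
    rw [hN]
    field_simp
  have hbigN : M' * (φ * G) < K + N ^ 2 * C := by
    have : (n:ℝ) * (C * (2 * Real.pi / l) ^ 2) ≤ N ^ 2 * C := by
      have h1 : (n:ℝ) ≤ n ^ 2 := by nlinarith
      have h2 := mul_le_mul_of_nonneg_right h1 hD.le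
      rw [hN, mul_pow]
      linarith
    linarith
  set u : ℝ → ℝ := fun θ => g θ * Real.cos (N * θ) with hu
  set v : ℝ → ℝ := fun θ => g θ * Real.sin (N * θ) with hv
  have hus : ContDiff ℝ (⊤ : ℕ∞) u :=
    hgs.mul (Real.contDiff_cos.comp (contDiff_const.mul contDiff_id))
  have hvs : ContDiff ℝ (⊤ : ℕ∞) v :=
    hgs.mul (Real.contDiff_sin.comp (contDiff_const.mul contDiff_id))
  have hup : Function.Periodic u l := fun x => by
    simp only [hu, hgp x, mul_add, hNl, Real.cos_add_nat_mul_two_pi]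
  have hvp : Function.Periodic v l := fun x => by
    simp only [hv, hgp x, mul_add, hNl, Real.sin_add_nat_mul_two_pi]
  have hgd : ∀ x, HasDerivAt g (deriv g x) x := fun x =>
    (hgs.differentiable (by simp) x).hasDerivAt
  have hlin : ∀ x, HasDerivAt (fun y => N * y) N x := fun x => by
    simpa using (hasDerivAt_id x).const_mul N
  have hud : ∀ x, deriv u x = deriv g x * Real.cos (N * x) - g x * (N * Real.sin (N * x)) := by
    intro x
    refine ((hgd x).mul (hlin x).cos).deriv.trans ?_
    ring
  have hvd : ∀ x, deriv v x = deriv g x * Real.sin (N * x) + g x * (N * Real.cos (N * x)) := by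
    intro x
    refine ((hgd x).mul (hlin x).sin).deriv.trans ?_
    ring
  have huc := hus.continuous
  have hvc := hvs.continuous
  have hu' : Continuous (deriv u) := hus.continuous_deriv (by simp)
  have hv' : Continuous (deriv v) := hvs.continuous_deriv (by simp)
  have hNsum : (∫ θ in (0:ℝ)..l, u θ ^ 2) + (∫ θ in (0:ℝ)..l, v θ ^ 2) = G := by
    rw [← intervalIntegral.integral_add
      (Continuous.intervalIntegrable (by fun_prop) _ _)
      (Continuous.intervalIntegrable (by fun_prop) _ _), hG]
    refine intervalIntegral.integral_congr fun x _ => ?_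
    simp only [hu, hv]
    linear_combination g x ^ 2 * Real.sin_sq_add_cos_sq (N * x)
  have hQ : ∀ w : ℝ → ℝ, Continuous w → Continuous (deriv w) →
      φ / 2 * (∫ θ in (0:ℝ)..l, (deriv m θ * w θ - m θ * deriv w θ) ^ 2)
        - φ' / (2 * φ) * (∫ θ in (0:ℝ)..l, (deriv w θ) ^ 2)
      = ∫ θ in (0:ℝ)..l, (φ / 2 * (deriv m θ * w θ - m θ * deriv w θ) ^ 2
        - φ' / (2 * φ) * (deriv w θ) ^ 2) := by
    intro w h1 h2
    rw [intervalIntegral.integral_sub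
      (Continuous.intervalIntegrable (by fun_prop) _ _)
      (Continuous.intervalIntegrable (by fun_prop) _ _),
      intervalIntegral.integral_const_mul, intervalIntegral.integral_const_mul]
  have hQsum : (∫ θ in (0:ℝ)..l, (φ / 2 * (deriv m θ * u θ - m θ * deriv u θ) ^ 2
        - φ' / (2 * φ) * (deriv u θ) ^ 2))
      + (∫ θ in (0:ℝ)..l, (φ / 2 * (deriv m θ * v θ - m θ * deriv v θ) ^ 2
        - φ' / (2 * φ) * (deriv v θ) ^ 2)) = K + N ^ 2 * C := by
    rw [hK, hC, ← intervalIntegral.integral_const_mul, ← intervalIntegral.integral_add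
      (Continuous.intervalIntegrable (by fun_prop) _ _)
      (Continuous.intervalIntegrable (by fun_prop) _ _), ← intervalIntegral.integral_add
      (Continuous.intervalIntegrable (by fun_prop) _ _)
      (Continuous.intervalIntegrable (by fun_prop) _ _)]
    refine intervalIntegral.integral_congr fun x _ => ?_
    simp only [hud, hvd]
    simp only [hu, hv]
    linear_combination (φ / 2 * ((deriv m x * g x - m x * deriv g x) ^ 2 + N ^ 2 * m x ^ 2 * g x ^ 2)
      - φ' / (2 * φ) * (deriv g x ^ 2 + N ^ 2 * g x ^ 2)) * Real.sin_sq_add_cos_sq (N * x)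
  have key : ∃ h : ℝ → ℝ, ContDiff ℝ (⊤ : ℕ∞) h ∧ Function.Periodic h l ∧
      (φ * ∫ θ in (0:ℝ)..l, (h θ) ^ 2 = 1) ∧
      M' < φ / 2 * (∫ θ in (0:ℝ)..l, (deriv m θ * h θ - m θ * deriv h θ) ^ 2)
        - φ' / (2 * φ) * (∫ θ in (0:ℝ)..l, (deriv h θ) ^ 2) := by
    by_contra hcon
    have h1 := mt (stmt13_scale l φ (φ' / (2 * φ)) (φ / 2) M' hl hφ m u hus hup) hcon
    have h2 := mt (stmt13_scale l φ (φ' / (2 * φ)) (φ / 2) M' hl hφ m v hvs hvp) hcon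
    rw [hQ u huc hu'] at h1
    rw [hQ v hvc hv'] at h2
    push Not at h1 h2
    rw [← hNsum, ← hQsum] at hbigN
    linarith
  obtain ⟨h, hh, hp, hnorm, hlast⟩ := key
  refine ⟨h, hh, hp, hnorm, ?_⟩
  have hh' : Continuous (deriv h) := hh.continuous_deriv (by simp)
  rw [intervalIntegral.integral_add
      (Continuous.intervalIntegrable (by fun_prop) _ _)
      (Continuous.intervalIntegrable (by fun_prop) _ _), ← hJ]
  have : M + φ' / (2 * φ) * J ≤ M' := le_max_right _ _
  linarith
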